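/- arXiv:1806.07020 — 2 statements merged into one kernel-verified Lean document; each statement's English description precedes it below -/
import Mathlib

section
/- Let ℍ be the hyperbolic plane (the upper half-plane with its hyperbolic metric) and let ε > 0. Let g be a parabolic bijective self-isometry of ℍ, i.e. dist(x, g(x)) > 0 for every x ∈ ℍ and ⨅_{x} dist(x, g(x)) = 0. Then the Margulis cusp 𝒯_ε(g) := ⋃_{i ∈ ℤ, i ≠ 0} {x ∈ ℍ : dist(x, g^i(x)) ≤ ε} is arccosh(√2)-quasiconvex: for all z₁, z₂ ∈ 𝒯_ε(g), every point w with dist(z₁,w) + dist(w,z₂) = dist(z₁,z₂) satisfies infDist(w, 𝒯_ε(g)) ≤ arccosh(√2) = log(1+√2). -/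
open UpperHalfPlane

/-- The Margulis cusp `𝒯_ε(g) = ⋃_{i ≠ 0} {x : dist x (gⁱ x) ≤ ε}` of a parabolic
isometry `g` of the hyperbolic plane. -/
def margulisCusp (ε : ℝ) (g : UpperHalfPlane ≃ᵢ UpperHalfPlane) : Set UpperHalfPlane :=
  ⋃ i ∈ {i : ℤ | i ≠ 0}, {x : UpperHalfPlane | dist x ((g ^ i) x) ≤ ε}

/-!
Displacement functions of isometries of `ℍ` have geodesically convex sublevel sets, and for a `g`
with zero infimal displacement any two of the sets `T_ε(gⁱ)` intersect: a point moved very little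
by `g` is moved at most `ε` by both `gⁱ` and `gʲ`. If `z₁ ∈ T_ε(gⁱ)`, `z₂ ∈ T_ε(gʲ)` and `x` lies
in both, then two sides of the triangle `z₁ z₂ x` stay in the cusp, and every point of the third
side is within `arcosh √2` of them because triangles in `ℍ` are slim.

Both geometric inputs are read off from the hyperboloid model, where `cosh (dist z w)` is bilinear
and geodesic segments are nonnegative linear combinations.
-/

section MetricSpace

variable {X : Type*} [PseudoMetricSpace X]

/-- The set of points lying between `x` and `y`; in a geodesic space it is the union of the geodesic
segments from `x` to `y`. -/
def metricSegment (x y : X) : Set X :=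
  {p | dist x p + dist p y = dist x y}

/-- Geodesic convexity, with segments understood metrically as in `metricSegment`. -/
def IsGeodesicallyConvex (s : Set X) : Prop :=
  ∀ x ∈ s, ∀ y ∈ s, metricSegment x y ⊆ s

/-- `δ`-quasiconvexity: metric segments with endpoints in `s` stay within `δ` of `s`. -/
def IsQuasiconvexWith (δ : ℝ) (s : Set X) : Prop :=
  ∀ x ∈ s, ∀ y ∈ s, ∀ w ∈ metricSegment x y, Metric.infDist w s ≤ δ

variable (X) in
/-- Rips' condition: each side of a triangle in `X` is within `δ` of the union of the other two. -/
def HasSlimTriangles (δ : ℝ) : Prop :=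
  ∀ x y z : X, ∀ w ∈ metricSegment x y,
    ∃ p ∈ metricSegment x z ∪ metricSegment y z, dist w p ≤ δ

theorem HasSlimTriangles.isQuasiconvexWith_biUnion {δ : ℝ} (hX : HasSlimTriangles X δ)
    {ι : Type*} {I : Set ι} {s : ι → Set X} (hconv : ∀ i ∈ I, IsGeodesicallyConvex (s i))
    (hinter : ∀ i ∈ I, ∀ j ∈ I, (s i ∩ s j).Nonempty) :
    IsQuasiconvexWith δ (⋃ i ∈ I, s i) := by
  intro x hx y hy w hw
  obtain ⟨i, hi, hxi⟩ := Set.mem_iUnion₂.1 hx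
  obtain ⟨j, hj, hyj⟩ := Set.mem_iUnion₂.1 hy
  obtain ⟨z, hzi, hzj⟩ := hinter i hi j hj
  obtain ⟨p, hp, hwp⟩ := hX x y z w hw
  have hp_mem : p ∈ ⋃ k ∈ I, s k := by
    rcases hp with hp | hp
    · exact Set.mem_biUnion hi (hconv i hi x hxi z hzi hp)
    · exact Set.mem_biUnion hj (hconv j hj y hyj z hzj hp)
  exact (Metric.infDist_le_dist_of_mem hp_mem).trans hwp

theorem sinh_dist_sq_eq_of_mem_metricSegment {x y p : X} (hp : p ∈ metricSegment x y) :
    Real.sinh (dist x y) ^ 2 = Real.sinh (dist p y) ^ 2 + Real.sinh (dist x p) ^ 2 +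
      2 * (Real.sinh (dist x p) * Real.sinh (dist p y)) * Real.cosh (dist x y) := by
  rw [← show dist x p + dist p y = dist x y from hp, Real.sinh_add, Real.cosh_add]
  linear_combination Real.sinh (dist p y) ^ 2 * Real.cosh_sq (dist x p) +
    Real.sinh (dist x p) ^ 2 * Real.cosh_sq (dist p y)

theorem dist_pow_apply_le (g : X ≃ᵢ X) (x : X) (n : ℕ) :
    dist x ((g ^ n) x) ≤ n * dist x (g x) := by
  induction n with
  | zero => simp
  | succ n ih =>
    calc dist x ((g ^ (n + 1)) x)
        ≤ dist x ((g ^ n) x) + dist ((g ^ n) x) ((g ^ n) (g x)) := dist_triangle _ _ _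
      _ ≤ n * dist x (g x) + dist x (g x) := by rw [(g ^ n).dist_eq]; gcongr
      _ = (n + 1 : ℕ) * dist x (g x) := by push_cast; ring

theorem dist_zpow_apply_le (g : X ≃ᵢ X) (x : X) (i : ℤ) :
    dist x ((g ^ i) x) ≤ i.natAbs * dist x (g x) := by
  obtain ⟨n, rfl | rfl⟩ := i.eq_nat_or_neg
  · simpa using dist_pow_apply_le g x n
  · have h : dist x ((g ^ n)⁻¹ x) = dist x ((g ^ n) x) := by
      rw [← (g ^ n).dist_eq, IsometryEquiv.apply_inv_self, dist_comm]
    simpa [h] using dist_pow_apply_le g x n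

theorem exists_dist_zpow_apply_le_of_iInf_eq_zero [Nonempty X] {g : X ≃ᵢ X}
    (hinf : ⨅ x, dist x (g x) = 0) {ε : ℝ} (hε : 0 < ε) (i j : ℤ) :
    ∃ x, dist x ((g ^ i) x) ≤ ε ∧ dist x ((g ^ j) x) ≤ ε := by
  set n := i.natAbs + j.natAbs + 1
  obtain ⟨x, hx⟩ : ∃ x, dist x (g x) < ε / n :=
    exists_lt_of_ciInf_lt (by rw [hinf]; positivity)
  have hn : n * dist x (g x) ≤ ε := by
    rw [lt_div_iff₀' (by positivity)] at hx
    exact hx.le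
  have small (k : ℤ) (hk : k.natAbs ≤ n) : dist x ((g ^ k) x) ≤ ε :=
    ((dist_zpow_apply_le g x k).trans (by gcongr)).trans hn
  exact ⟨x, small i (by omega), small j (by omega)⟩

end MetricSpace

theorem metricSegment_self {X : Type*} [MetricSpace X] (x : X) : metricSegment x x = {x} := by
  ext p
  simp only [metricSegment, Set.mem_ofPred, dist_self, dist_comm p x, add_self_eq_zero,
    dist_eq_zero, eq_comm, Set.mem_singleton_iff]

section Minkowski

variable {E : Type*} [NormedAddCommGroup E] [InnerProductSpace ℝ E]

variable (E) in
/-- The Lorentzian form `⟨(t, x), (s, y)⟩ ↦ t s - ⟪x, y⟫` on `ℝ × E`, with the sign that makes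
time-like vectors positive. -/
noncomputable def minkowskiForm : LinearMap.BilinForm ℝ (ℝ × E) :=
  (LinearMap.mul ℝ ℝ).compl₁₂ (.fst ℝ ℝ E) (.fst ℝ ℝ E) -
    (innerₗ E).compl₁₂ (.snd ℝ ℝ E) (.snd ℝ ℝ E)

local notation "η" => minkowskiForm _

theorem minkowskiForm_apply (a b : ℝ × E) : η a b = a.1 * b.1 - inner ℝ a.2 b.2 := rfl

theorem minkowskiForm_comm (a b : ℝ × E) : η a b = η b a := by
  rw [minkowskiForm_apply, minkowskiForm_apply, mul_comm, real_inner_comm]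

theorem minkowskiForm_self_neg {m a : ℝ × E} (hm : 0 < η m m) (hma : η m a = 0) (ha : a ≠ 0) :
    η a a < 0 := by
  simp only [minkowskiForm_apply, real_inner_self_eq_norm_sq] at hm hma ⊢
  have hinner : m.1 * a.1 = inner ℝ m.2 a.2 := sub_eq_zero.1 hma
  have hm₁ : m.1 ≠ 0 := fun h => by
    rw [h] at hm
    nlinarith [sq_nonneg ‖m.2‖]
  have ha₂ : a.2 ≠ 0 := fun h => by
    rw [h, inner_zero_right] at hinner
    exact ha (Prod.ext ((mul_eq_zero.1 hinner).resolve_left hm₁) h)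
  have hcs : m.1 ^ 2 * a.1 ^ 2 ≤ ‖m.2‖ ^ 2 * ‖a.2‖ ^ 2 := by
    rw [← mul_pow, ← mul_pow, hinner]
    exact sq_le_sq' (neg_le_of_abs_le (abs_real_inner_le_norm _ _)) (real_inner_le_norm _ _)
  have hlt : ‖m.2‖ ^ 2 * ‖a.2‖ ^ 2 < m.1 ^ 2 * ‖a.2‖ ^ 2 :=
    mul_lt_mul_of_pos_right (by linarith) (by positivity)
  have : m.1 ^ 2 * a.1 ^ 2 < m.1 ^ 2 * ‖a.2‖ ^ 2 := hcs.trans_lt hlt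
  have := lt_of_mul_lt_mul_left this (sq_nonneg _)
  linarith

theorem minkowskiForm_self_mul_self_le (a : ℝ × E) {m : ℝ × E} (hm : 0 < η m m) :
    η m m * η a a ≤ η m a ^ 2 := by
  set v := η m m • a - η m a • m
  have hmv : η m v = 0 := by
    simp only [v, map_sub, map_smul, smul_eq_mul]; ring
  have hvv : η v v = η m m * (η m m * η a a - η m a ^ 2) := by
    simp only [v, map_sub, map_smul, LinearMap.sub_apply, LinearMap.smul_apply, smul_eq_mul,
      minkowskiForm_comm a m]
    ring
  have hv : η v v ≤ 0 := by
    rcases eq_or_ne v 0 with h | h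
    · simp [h]
    · exact (minkowskiForm_self_neg hm hmv h).le
  rw [hvv] at hv
  exact sub_nonpos.1 (nonpos_of_mul_nonpos_right hv hm)

theorem minkowskiForm_gram_sq_le (a b : ℝ × E) {m : ℝ × E} (hm : 0 < η m m) :
    (η m a * η m b - η m m * η a b) ^ 2 ≤
      (η m a ^ 2 - η m m * η a a) * (η m b ^ 2 - η m m * η b b) := by
  set G : LinearMap.BilinForm ℝ (ℝ × E) :=
    LinearMap.BilinForm.linMulLin (η m) (η m) - η m m • minkowskiForm E
  have apply_G (x y : ℝ × E) : G x y = η m x * η m y - η m m * η x y := rfl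
  have hG_nonneg (x : ℝ × E) : 0 ≤ G x x := by
    rw [apply_G, ← sq]
    exact sub_nonneg.2 (minkowskiForm_self_mul_self_le x hm)
  have hG_symm : LinearMap.IsSymm G := ⟨fun x y => by
    rw [apply_G, apply_G, minkowskiForm_comm x y, RingHom.id_apply, mul_comm (η m x)]⟩
  simpa only [apply_G, ← sq] using G.apply_sq_le_of_symm hG_nonneg hG_symm a b

theorem minkowskiForm_sq_mul_le_of_orthogonal {m m' u u' : ℝ × E} (hm : 0 < η m m)
    (hm' : 0 < η m' m') (hmu : η m u = 0) (hmu' : η m' u' = 0) :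
    η u u' ^ 2 * (η m m * η m' m') ≤ η m m' ^ 2 * (η u u * η u' u') := by
  have huu : η u u ≤ 0 :=
    nonpos_of_mul_nonpos_right (by simpa [hmu] using minkowskiForm_self_mul_self_le u hm) hm
  have h : η m m * η u u' ^ 2 ≤ -η u u * (η m u' ^ 2 - η m m * η u' u') := by
    have := minkowskiForm_gram_sq_le u u' hm
    rw [hmu] at this
    exact le_of_mul_le_mul_left (by linarith) hm
  have h' : η m' m' * η m u' ^ 2 ≤ -η u' u' * (η m m' ^ 2 - η m' m' * η m m) := by
    have := minkowskiForm_gram_sq_le u' m hm'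
    rw [hmu', minkowskiForm_comm u' m, minkowskiForm_comm m' m] at this
    exact le_of_mul_le_mul_left (by linarith) hm'
  have := mul_le_mul_of_nonneg_left h hm'.le
  have := mul_le_mul_of_nonneg_left h' (neg_nonneg.2 huu)
  linarith

end Minkowski

section Hyperboloid

local notation "η" => minkowskiForm ℂ

/-- The isometry from the upper half-plane onto the upper sheet of the hyperboloid `η a a = 1`
in `ℝ × ℂ`. -/
noncomputable def toHyperboloid (z : ℍ) : ℝ × ℂ :=
  ((z.re ^ 2 + z.im ^ 2 + 1) / (2 * z.im), ⟨(z.re ^ 2 + z.im ^ 2 - 1) / (2 * z.im), z.re / z.im⟩)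

theorem minkowskiForm_toHyperboloid (z w : ℍ) :
    η (toHyperboloid z) (toHyperboloid w) = Real.cosh (dist z w) := by
  rw [cosh_dist, Complex.dist_eq, Complex.sq_norm, Complex.normSq_apply, minkowskiForm_apply,
    Complex.inner]
  simp only [toHyperboloid, Complex.mul_re, Complex.conj_re, Complex.conj_im, Complex.sub_re,
    Complex.sub_im, coe_re, coe_im]
  field_simp
  ring

theorem minkowskiForm_toHyperboloid_self (z : ℍ) :
    η (toHyperboloid z) (toHyperboloid z) = 1 := by
  rw [minkowskiForm_toHyperboloid, dist_self, Real.cosh_zero]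

theorem toHyperboloid_fst_pos (z : ℍ) : 0 < (toHyperboloid z).1 := by
  have := z.im_pos
  simp only [toHyperboloid]
  positivity

theorem exists_smul_toHyperboloid_eq {v : ℝ × ℂ} (hv₁ : 0 < v.1) (hv : 0 < η v v) :
    ∃ p : ℍ, √(η v v) • toHyperboloid p = v := by
  obtain ⟨t, ζ⟩ := v
  have hη : η (t, ζ) (t, ζ) = t ^ 2 - ζ.re ^ 2 - ζ.im ^ 2 := by
    rw [minkowskiForm_apply, real_inner_self_eq_norm_sq, Complex.sq_norm, Complex.normSq_apply]
    ring
  have hN : 0 < √(η (t, ζ) (t, ζ)) := Real.sqrt_pos.2 hv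
  have hN_sq := Real.sq_sqrt hv.le
  set N := √(η (t, ζ) (t, ζ))
  rw [hη] at hN_sq
  have hζ : 0 < t - ζ.re := sub_pos.2 <|
    (le_abs_self _).trans_lt (abs_lt_of_sq_lt_sq (by nlinarith [sq_nonneg ζ.im]) hv₁.le)
  refine ⟨⟨⟨ζ.im / (t - ζ.re), N / (t - ζ.re)⟩, div_pos hN hζ⟩, ?_⟩
  refine Prod.ext ?_ (Complex.ext ?_ ?_)
  all_goals
    simp only [toHyperboloid, mk_re, mk_im, Prod.smul_fst, Prod.smul_snd, Complex.smul_re,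
      Complex.smul_im, smul_eq_mul]
    field_simp
  all_goals linear_combination hN_sq

theorem sinh_dist_smul_toHyperboloid {x y p : ℍ} (hp : p ∈ metricSegment x y) :
    Real.sinh (dist x y) • toHyperboloid p =
      Real.sinh (dist p y) • toHyperboloid x + Real.sinh (dist x p) • toHyperboloid y := by
  have hcosh := Real.cosh_add (dist x p) (dist p y)
  have hsinh := Real.sinh_add (dist x p) (dist p y)
  rw [show dist x p + dist p y = dist x y from hp] at hcosh hsinh
  have hxp := Real.cosh_sq (dist x p)
  have hpy := Real.cosh_sq (dist p y)
  set v := Real.sinh (dist x y) • toHyperboloid p -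
    (Real.sinh (dist p y) • toHyperboloid x + Real.sinh (dist x p) • toHyperboloid y)
  have hpv : η (toHyperboloid p) v = 0 := by
    simp only [v, map_sub, map_add, map_smul, smul_eq_mul, minkowskiForm_toHyperboloid, dist_self,
      Real.cosh_zero, dist_comm p x]
    rw [hsinh]
    ring
  have hvv : η v v = 0 := by
    simp only [v, map_sub, map_add, map_smul, LinearMap.sub_apply, LinearMap.add_apply,
      LinearMap.smul_apply, smul_eq_mul, minkowskiForm_toHyperboloid, dist_self, Real.cosh_zero,
      dist_comm p x, dist_comm y p, dist_comm y x]
    rw [hsinh, hcosh]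
    linear_combination (-Real.sinh (dist p y) ^ 2) * hxp - Real.sinh (dist x p) ^ 2 * hpy
  have hpp : 0 < η (toHyperboloid p) (toHyperboloid p) := by
    rw [minkowskiForm_toHyperboloid_self]; exact one_pos
  by_contra h
  exact (minkowskiForm_self_neg hpp hpv (sub_ne_zero.2 h)).ne hvv

theorem mul_sinh_dist_eq_of_smul_toHyperboloid {x y p : ℍ} {N s t : ℝ} (hN : 0 ≤ N) (ht : 0 ≤ t)
    (hp : N • toHyperboloid p = s • toHyperboloid x + t • toHyperboloid y) :
    N * Real.sinh (dist x p) = t * Real.sinh (dist x y) := by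
  have hN_sq : N ^ 2 = s ^ 2 + t ^ 2 + 2 * s * t * Real.cosh (dist x y) := by
    have := congrArg (fun v => η v v) hp
    simp only [map_add, map_smul, LinearMap.add_apply, LinearMap.smul_apply, smul_eq_mul,
      minkowskiForm_toHyperboloid, dist_self, Real.cosh_zero, dist_comm y x] at this
    linear_combination this
  have hcosh : N * Real.cosh (dist x p) = s + t * Real.cosh (dist x y) := by
    have := congrArg (η (toHyperboloid x)) hp
    simpa only [map_add, map_smul, smul_eq_mul, minkowskiForm_toHyperboloid, dist_self,
      Real.cosh_zero, mul_one] using this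
  rw [← sq_eq_sq₀ (by positivity) (by positivity), mul_pow, mul_pow, Real.sinh_sq, Real.sinh_sq]
  linear_combination (N * Real.cosh (dist x p) + s + t * Real.cosh (dist x y)) * hcosh - hN_sq

theorem mem_metricSegment_of_smul_toHyperboloid {x y p : ℍ} {N s t : ℝ} (hN : 0 < N) (hs : 0 ≤ s)
    (ht : 0 ≤ t) (hp : N • toHyperboloid p = s • toHyperboloid x + t • toHyperboloid y) :
    p ∈ metricSegment x y := by
  have hsinh_xp := mul_sinh_dist_eq_of_smul_toHyperboloid hN.le ht hp
  have hsinh_yp := mul_sinh_dist_eq_of_smul_toHyperboloid hN.le hs (hp.trans (add_comm _ _))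
  rw [dist_comm y p, dist_comm y x] at hsinh_yp
  have hη (q : ℍ) : N * Real.cosh (dist q p) =
      s * Real.cosh (dist q x) + t * Real.cosh (dist q y) := by
    have := congrArg (η (toHyperboloid q)) hp
    simpa only [map_add, map_smul, smul_eq_mul, minkowskiForm_toHyperboloid] using this
  have hxp := hη x
  have hyp := hη y
  have hpp := hη p
  rw [dist_self, Real.cosh_zero] at hxp hyp hpp
  rw [dist_comm y p, dist_comm y x] at hyp
  rw [dist_comm p x] at hpp
  refine Real.cosh_injOn (Set.mem_Ici.2 (by positivity)) (Set.mem_Ici.2 dist_nonneg) ?_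
  apply mul_left_cancel₀ (pow_pos hN 2).ne'
  calc N ^ 2 * Real.cosh (dist x p + dist p y)
      = N * Real.cosh (dist x p) * (N * Real.cosh (dist p y)) +
          N * Real.sinh (dist x p) * (N * Real.sinh (dist p y)) := by rw [Real.cosh_add]; ring
    _ = (s * (s + t * Real.cosh (dist x y)) + t * (s * Real.cosh (dist x y) + t)) *
          Real.cosh (dist x y) := by
        rw [hxp, hyp, hsinh_xp, hsinh_yp]
        linear_combination s * t * Real.sinh_sq (dist x y)
    _ = N ^ 2 * Real.cosh (dist x y) := by
        linear_combination -Real.cosh (dist x y) * (N * hpp + s * hxp + t * hyp)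

theorem exists_mem_metricSegment_smul_toHyperboloid (x y : ℍ) {s t : ℝ} (hs : 0 < s)
    (ht : 0 < t) :
    ∃ p ∈ metricSegment x y,
      √(s ^ 2 + t ^ 2 + 2 * s * t * Real.cosh (dist x y)) • toHyperboloid p =
        s • toHyperboloid x + t • toHyperboloid y := by
  set v := s • toHyperboloid x + t • toHyperboloid y
  have hvv : η v v = s ^ 2 + t ^ 2 + 2 * s * t * Real.cosh (dist x y) := by
    simp only [v, map_add, map_smul, LinearMap.add_apply, LinearMap.smul_apply, smul_eq_mul,
      minkowskiForm_toHyperboloid, dist_self, Real.cosh_zero, dist_comm y x]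
    ring
  have hv_pos : 0 < η v v := by rw [hvv]; positivity
  have hv₁ : 0 < v.1 :=
    add_pos (mul_pos hs (toHyperboloid_fst_pos x)) (mul_pos ht (toHyperboloid_fst_pos y))
  obtain ⟨p, hp⟩ := exists_smul_toHyperboloid_eq hv₁ hv_pos
  exact ⟨p, mem_metricSegment_of_smul_toHyperboloid (Real.sqrt_pos.2 hv_pos) hs.le ht.le hp,
    hvv ▸ hp⟩

theorem minkowskiForm_toHyperboloid_add_add (x y x' y' : ℍ) :
    η (toHyperboloid x + toHyperboloid y) (toHyperboloid x' + toHyperboloid y') =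
      Real.cosh (dist x x') + Real.cosh (dist y y') +
        (Real.cosh (dist x y') + Real.cosh (dist y x')) := by
  simp only [map_add, LinearMap.add_apply, minkowskiForm_toHyperboloid]
  ring

theorem minkowskiForm_toHyperboloid_sub_sub (x y x' y' : ℍ) :
    η (toHyperboloid x - toHyperboloid y) (toHyperboloid x' - toHyperboloid y') =
      Real.cosh (dist x x') + Real.cosh (dist y y') -
        (Real.cosh (dist x y') + Real.cosh (dist y x')) := by
  simp only [map_sub, LinearMap.sub_apply, minkowskiForm_toHyperboloid]
  ring

theorem minkowskiForm_toHyperboloid_add_sub (x y : ℍ) :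
    η (toHyperboloid x + toHyperboloid y) (toHyperboloid x - toHyperboloid y) = 0 := by
  simp only [map_add, map_sub, LinearMap.add_apply, minkowskiForm_toHyperboloid, dist_self,
    dist_comm y x]
  ring

theorem cosh_dist_add_cosh_dist_le {x y x' y' : ℍ} (h : dist x y = dist x' y') :
    Real.cosh (dist x y') + Real.cosh (dist y x') ≤
      Real.cosh (dist x y) * (Real.cosh (dist x x') + Real.cosh (dist y y')) := by
  set C := Real.cosh (dist x y') + Real.cosh (dist y x') with hC
  set S := Real.cosh (dist x x') + Real.cosh (dist y y') with hS
  set c := Real.cosh (dist x y)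
  have hc : 1 ≤ c := Real.one_le_cosh _
  have hη_add_self (a b : ℍ) (hab : dist a b = dist x y) :
      η (toHyperboloid a + toHyperboloid b) (toHyperboloid a + toHyperboloid b) = 2 * (1 + c) := by
    rw [minkowskiForm_toHyperboloid_add_add, dist_comm b a, hab, dist_self, dist_self,
      Real.cosh_zero]
    ring
  have hη_sub_self (a b : ℍ) (hab : dist a b = dist x y) :
      η (toHyperboloid a - toHyperboloid b) (toHyperboloid a - toHyperboloid b) = 2 * (1 - c) := by
    rw [minkowskiForm_toHyperboloid_sub_sub, dist_comm b a, hab, dist_self, dist_self,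
      Real.cosh_zero]
    ring
  -- `x + y` and `x - y` are orthogonal, timelike and spacelike, and so are `x' + y'` and `x' - y'`.
  have hsq : ((S - C) * (1 + c)) ^ 2 ≤ ((S + C) * (c - 1)) ^ 2 := by
    have := minkowskiForm_sq_mul_le_of_orthogonal
      (by rw [hη_add_self x y rfl]; positivity) (by rw [hη_add_self x' y' h.symm]; positivity)
      (minkowskiForm_toHyperboloid_add_sub x y) (minkowskiForm_toHyperboloid_add_sub x' y')
    rw [hη_add_self x y rfl, hη_add_self x' y' h.symm, hη_sub_self x y rfl,
      hη_sub_self x' y' h.symm, minkowskiForm_toHyperboloid_add_add,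
      minkowskiForm_toHyperboloid_sub_sub, ← hS, ← hC] at this
    linarith
  have hnonneg : 0 ≤ (S + C) * (c - 1) := mul_nonneg (by positivity) (sub_nonneg.2 hc)
  linarith [(abs_le_of_sq_le_sq' hsq hnonneg).1]

theorem sinh_dist_sq_mul_cosh_dist {x y p x' y' p' : ℍ} (hp : p ∈ metricSegment x y)
    (hp' : p' ∈ metricSegment x' y') (hxp : dist x p = dist x' p') (hpy : dist p y = dist p' y') :
    Real.sinh (dist x y) ^ 2 * Real.cosh (dist p p') =
      Real.sinh (dist p y) ^ 2 * Real.cosh (dist x x') +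
        Real.sinh (dist x p) ^ 2 * Real.cosh (dist y y') +
        Real.sinh (dist x p) * Real.sinh (dist p y) *
          (Real.cosh (dist x y') + Real.cosh (dist y x')) := by
  have hxy : dist x' y' = dist x y := by rw [← hp, ← hp', hxp, hpy]
  have hP' := sinh_dist_smul_toHyperboloid hp'
  rw [hxy, ← hxp, ← hpy] at hP'
  have := congrArg₂ (fun v w => η v w) (sinh_dist_smul_toHyperboloid hp) hP'
  simp only [map_add, map_smul, LinearMap.add_apply, LinearMap.smul_apply, smul_eq_mul,
    minkowskiForm_toHyperboloid] at this
  linear_combination this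

theorem dist_le_max_of_mem_metricSegment {x y p x' y' p' : ℍ} (hp : p ∈ metricSegment x y)
    (hp' : p' ∈ metricSegment x' y') (hxp : dist x p = dist x' p') (hpy : dist p y = dist p' y') :
    dist p p' ≤ max (dist x x') (dist y y') := by
  have hxy : dist x y = dist x' y' := by rw [← hp, ← hp', hxp, hpy]
  rcases eq_or_ne x y with rfl | hne
  · obtain rfl : x' = y' := by rw [← dist_eq_zero, ← hxy, dist_self]
    rw [metricSegment_self, Set.mem_singleton_iff] at hp hp'
    rw [hp, hp']
    exact le_max_left _ _
  set D := max (dist x x') (dist y y')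
  have cosh_le {d : ℝ} (hd : 0 ≤ d) (hdD : d ≤ D) : Real.cosh d ≤ Real.cosh D :=
    Real.cosh_strictMonoOn.monotoneOn hd (hd.trans hdD) hdD
  have hx := cosh_le dist_nonneg (le_max_left (dist x x') (dist y y'))
  have hy := cosh_le dist_nonneg (le_max_right (dist x x') (dist y y'))
  have hdiag : Real.cosh (dist x y') + Real.cosh (dist y x') ≤
      Real.cosh (dist x y) * (Real.cosh D + Real.cosh D) :=
    (cosh_dist_add_cosh_dist_le hxy).trans (by gcongr)
  have hsinh : 0 < Real.sinh (dist x y) := Real.sinh_pos_iff.2 (dist_pos.2 hne)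
  refine (Real.cosh_strictMonoOn.le_iff_le dist_nonneg (dist_nonneg.trans (le_max_left _ _))).1
    (le_of_mul_le_mul_left ?_ (pow_pos hsinh 2))
  calc Real.sinh (dist x y) ^ 2 * Real.cosh (dist p p')
      ≤ Real.sinh (dist p y) ^ 2 * Real.cosh D + Real.sinh (dist x p) ^ 2 * Real.cosh D +
          Real.sinh (dist x p) * Real.sinh (dist p y) *
            (Real.cosh (dist x y) * (Real.cosh D + Real.cosh D)) := by
        rw [sinh_dist_sq_mul_cosh_dist hp hp' hxp hpy]; gcongr
    _ = Real.sinh (dist x y) ^ 2 * Real.cosh D := by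
        rw [sinh_dist_sq_eq_of_mem_metricSegment hp]; ring

theorem isGeodesicallyConvex_setOf_dist_le {f : ℍ → ℍ} (hf : Isometry f) (ε : ℝ) :
    IsGeodesicallyConvex {x | dist x (f x) ≤ ε} := by
  intro x hx y hy p hp
  have hfp : f p ∈ metricSegment (f x) (f y) := by
    simpa only [metricSegment, Set.mem_ofPred_eq, hf.dist_eq] using hp
  exact (dist_le_max_of_mem_metricSegment hp hfp (hf.dist_eq _ _).symm (hf.dist_eq _ _).symm).trans
    (max_le hx hy)

theorem cosh_mul_cosh_le_or_of_mem_metricSegment {x y w : ℍ} (hw : w ∈ metricSegment x y)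
    (z : ℍ) :
    Real.cosh (dist w x) * Real.cosh (dist w z) ≤ Real.cosh (dist x z) ∨
      Real.cosh (dist w y) * Real.cosh (dist w z) ≤ Real.cosh (dist y z) := by
  rcases eq_or_ne x w with rfl | hxw
  · simp
  by_contra! hacute
  have hsinh_xw : 0 < Real.sinh (dist x w) := Real.sinh_pos_iff.2 (dist_pos.2 hxw)
  have hsinh_wy : 0 ≤ Real.sinh (dist w y) := Real.sinh_nonneg_iff.2 dist_nonneg
  have hsum : Real.sinh (dist x y) * Real.cosh (dist w z) =
      Real.sinh (dist w y) * Real.cosh (dist x z) +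
        Real.sinh (dist x w) * Real.cosh (dist y z) := by
    have := congrArg (η (toHyperboloid z)) (sinh_dist_smul_toHyperboloid hw)
    simpa only [map_add, map_smul, smul_eq_mul, minkowskiForm_toHyperboloid, dist_comm z] using this
  have hlt : Real.sinh (dist x y) * Real.cosh (dist w z) <
      Real.sinh (dist x y) * Real.cosh (dist w z) :=
    calc Real.sinh (dist x y) * Real.cosh (dist w z)
        < Real.sinh (dist w y) * (Real.cosh (dist w x) * Real.cosh (dist w z)) +
            Real.sinh (dist x w) * (Real.cosh (dist w y) * Real.cosh (dist w z)) := by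
          rw [hsum]
          exact add_lt_add_of_le_of_lt (mul_le_mul_of_nonneg_left hacute.1.le hsinh_wy)
            (mul_lt_mul_of_pos_left hacute.2 hsinh_xw)
      _ = Real.sinh (dist x y) * Real.cosh (dist w z) := by
          rw [← show dist x w + dist w y = dist x y from hw, Real.sinh_add, dist_comm w x]
          ring
  exact hlt.false

theorem exists_mem_metricSegment_dist_le_arcosh_sqrt_two {x z w : ℍ}
    (h : Real.cosh (dist w x) * Real.cosh (dist w z) ≤ Real.cosh (dist x z)) :
    ∃ p ∈ metricSegment x z, dist w p ≤ Real.arcosh √2 := by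
  set r := Real.cosh (dist w x)
  set s := Real.cosh (dist w z)
  have hr : 0 < r := Real.cosh_pos _
  have hs : 0 < s := Real.cosh_pos _
  -- In the Klein model centred at `w`, `p` is the midpoint of the side `x z`.
  obtain ⟨p, hp, hp_eq⟩ := exists_mem_metricSegment_smul_toHyperboloid x z hs hr
  refine ⟨p, hp, ?_⟩
  set q := s ^ 2 + r ^ 2 + 2 * s * r * Real.cosh (dist x z)
  have hcosh : √q * Real.cosh (dist w p) = 2 * (r * s) := by
    have := congrArg (η (toHyperboloid w)) hp_eq
    simp only [map_add, map_smul, smul_eq_mul, minkowskiForm_toHyperboloid] at this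
    linear_combination this
  have hq : 2 * (r * s) ^ 2 ≤ q :=
    calc 2 * (r * s) ^ 2 = 2 * s * r * (r * s) := by ring
      _ ≤ 2 * s * r * Real.cosh (dist x z) := by gcongr
      _ ≤ q := le_add_of_nonneg_left (by positivity)
  have hq_pos : 0 < q := lt_of_lt_of_le (by positivity) hq
  rw [← Real.arcosh_cosh (dist_nonneg (x := w) (y := p)),
    Real.arcosh_le_arcosh (Real.cosh_pos _) (by positivity)]
  refine Real.le_sqrt_of_sq_le (le_of_mul_le_mul_left ?_ hq_pos)
  calc q * Real.cosh (dist w p) ^ 2 = (√q * Real.cosh (dist w p)) ^ 2 := by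
        rw [mul_pow, Real.sq_sqrt hq_pos.le]
    _ = 2 * (r * s) ^ 2 * 2 := by rw [hcosh]; ring
    _ ≤ q * 2 := by gcongr

theorem hasSlimTriangles_arcosh_sqrt_two : HasSlimTriangles ℍ (Real.arcosh √2) := by
  intro x y z w hw
  rcases cosh_mul_cosh_le_or_of_mem_metricSegment hw z with h | h
  · obtain ⟨p, hp, hwp⟩ := exists_mem_metricSegment_dist_le_arcosh_sqrt_two h
    exact ⟨p, Or.inl hp, hwp⟩
  · obtain ⟨p, hp, hwp⟩ := exists_mem_metricSegment_dist_le_arcosh_sqrt_two h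
    exact ⟨p, Or.inr hp, hwp⟩

end Hyperboloid

theorem arcosh_sqrt_two : Real.arcosh √2 = Real.log (1 + √2) := by
  rw [Real.arcosh, Real.sq_sqrt zero_le_two, add_comm]
  norm_num

theorem margulisCusp_quasiconvex_general {ε : ℝ} (hε : 0 < ε) {g : ℍ ≃ᵢ ℍ}
    (hinf : ⨅ x, dist x (g x) = 0) :
    IsQuasiconvexWith (Real.log (1 + √2)) (margulisCusp ε g) := by
  rw [← arcosh_sqrt_two]
  exact hasSlimTriangles_arcosh_sqrt_two.isQuasiconvexWith_biUnion
    (fun i _ => isGeodesicallyConvex_setOf_dist_le (g ^ i).isometry ε)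
    (fun i _ j _ => exists_dist_zpow_apply_le_of_iInf_eq_zero hinf hε i j)

/-- Corollary 3.8 (qctube), parabolic case, for `X = ℍ`: the Margulis cusp of a
parabolic isometry is `arccosh √2 = log (1+√2)`-quasiconvex. -/
theorem margulisCusp_quasiconvex (ε : ℝ) (hε : 0 < ε)
    (g : UpperHalfPlane ≃ᵢ UpperHalfPlane)
    (hpos : ∀ x : UpperHalfPlane, 0 < dist x (g x))
    (hinf : (⨅ x : UpperHalfPlane, dist x (g x)) = 0) :
    ∀ z₁ ∈ margulisCusp ε g, ∀ z₂ ∈ margulisCusp ε g, ∀ w : UpperHalfPlane,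
      dist z₁ w + dist w z₂ = dist z₁ z₂ →
        Metric.infDist w (margulisCusp ε g) ≤ Real.log (1 + Real.sqrt 2) :=
  margulisCusp_quasiconvex_general hε hinf
end

section
/- Let ℍ be the hyperbolic plane (the upper half-plane with its hyperbolic metric). For every ε > 0 there exists L > 0 with the following property. Let g and h be parabolic bijective self-isometries of ℍ (everywhere positive displacement with infimum 0), set 𝒯_ε(g) := ⋃_{i∈ℤ, i≠0} {x : dist(x, g^i(x)) ≤ ε} and likewise 𝒯_ε(h), and let Hull(𝒯_ε(g)), Hull(𝒯_ε(h)) be their closed convex hulls. If dist(p, q) ≥ L for all p ∈ Hull(𝒯_ε(g)) and q ∈ Hull(𝒯_ε(h)), then g and h generate a free group of rank two: the homomorphism from the free group on two generators to the group of bijective self-isometries of ℍ determined by g and h is injective. -/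
open UpperHalfPlane

/-- A subset of the hyperbolic plane is (geodesically) convex if it contains every
point between two of its points. -/
def GeodesicallyConvex (A : Set UpperHalfPlane) : Prop :=
  ∀ x ∈ A, ∀ y ∈ A, ∀ z : UpperHalfPlane, dist x z + dist z y = dist x y → z ∈ A

/-- The closed convex hull of a subset of the hyperbolic plane: the intersection of all
closed convex subsets containing it. -/
def hypConvexHull (A : Set UpperHalfPlane) : Set UpperHalfPlane :=
  ⋂₀ {C : Set UpperHalfPlane | A ⊆ C ∧ IsClosed C ∧ GeodesicallyConvex C}

/-!
Every isometry of `ℍ` is the action of some matrix in `GL(2, ℝ)`, and an explicit formula for the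
displacement shows that the matrix of a parabolic isometry is parabolic, so the isometry is a
translation in a suitable coordinate. After one common change of coordinates `g` is `z ↦ z + s` and
either `h` is `z ↦ z + t` as well, or `h` becomes `w ↦ w + t` in the coordinate `w = -1/z`. The set
where a translation by `s` has displacement at most `ε` is the horoball `{|s| ≤ 2 sinh(ε/2) Im z}`.
In the first case the horoballs of `g` and `h` meet; in the second one, their distance forces
`|s t| ≥ 4`. Since `|Re z| |Re(-1/z)| < 1`, the rounded coordinates `Re z / s` and `Re(-1/z) / t`
are then never both nonzero, while `g` and `h` raise the first and the second one, respectively,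
by `1`: this is a ping-pong configuration.
-/

open Matrix hiding J
open scoped MatrixGroups

theorem num_mul_denom_sub_num_mul_denom (g : GL (Fin 2) ℝ) (z w : ℂ) :
    num g z * denom g w - num g w * denom g z = g.det.val * (z - w) := by
  simp only [num, denom, GeneralLinearGroup.val_det_apply, det_fin_two]
  push_cast
  ring

instance glIsIsometricSMul : IsIsometricSMul (GL (Fin 2) ℝ) ℍ where
  isometry_smul g := Isometry.of_dist_eq fun z w ↦ by
    have hz : ‖denom g z‖ ≠ 0 := norm_ne_zero_iff.2 (denom_ne_zero g z)
    have hw : ‖denom g w‖ ≠ 0 := norm_ne_zero_iff.2 (denom_ne_zero g w)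
    have hdet : |g.det.val| ≠ 0 := abs_ne_zero.2 g.det.ne_zero
    have h_num : dist (↑(g • z) : ℂ) ↑(g • w) =
        |g.det.val| * dist (z : ℂ) w / (‖denom g z‖ * ‖denom g w‖) := by
      rw [coe_smul, coe_smul, Complex.dist_eq, ← map_sub, norm_σ,
        div_sub_div _ _ (denom_ne_zero g z) (denom_ne_zero g w), mul_comm (denom g z) (num g w),
        num_mul_denom_sub_num_mul_denom, norm_div, norm_mul, norm_mul, Complex.norm_real,
        Real.norm_eq_abs, Complex.dist_eq]
    have h_im : (g • z).im * (g • w).im =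
        (|g.det.val| / (‖denom g z‖ * ‖denom g w‖)) ^ 2 * (z.im * w.im) := by
      rw [im_smul_eq_div_normSq, im_smul_eq_div_normSq, Complex.normSq_eq_norm_sq,
        Complex.normSq_eq_norm_sq]
      ring
    rw [UpperHalfPlane.dist_eq, UpperHalfPlane.dist_eq, h_num, h_im,
      Real.sqrt_mul (sq_nonneg _), Real.sqrt_sq (by positivity)]
    field_simp

theorem sinh_half_dist_smul_sq (g : GL (Fin 2) ℝ) (z : ℍ) :
    4 * |g.det.val| * z.im ^ 2 * Real.sinh (dist z (g • z) / 2) ^ 2 =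
      Complex.normSq (σ g z * denom g z - num g z) := by
  have hd := denom_ne_zero g z
  have h_dist : dist (z : ℂ) ↑(g • z) = ‖σ g z * denom g z - num g z‖ / ‖denom g z‖ := by
    rw [coe_smul, Complex.dist_eq, ← norm_div, sub_div, mul_div_cancel_right₀ _ hd, ← norm_σ g,
      map_sub, σ_sq]
  have hd' : ‖denom g z‖ ≠ 0 := norm_ne_zero_iff.2 hd
  have hdet : |g.det.val| ≠ 0 := abs_ne_zero.2 g.det.ne_zero
  have hy := z.im_ne_zero
  rw [sinh_half_dist, h_dist, div_pow, mul_pow, Real.sq_sqrt (by positivity),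
    im_smul_eq_div_normSq, Complex.normSq_eq_norm_sq, Complex.normSq_eq_norm_sq]
  field_simp
  ring

theorem discr_le_sinh_half_dist_smul {g : GL (Fin 2) ℝ} (hg : 0 < g.det.val) (z : ℍ) :
    g.val.discr ≤ 4 * |g.det.val| * Real.sinh (dist z (g • z) / 2) ^ 2 := by
  refine le_of_mul_le_mul_right ?_ (pow_pos z.im_pos 2)
  calc g.val.discr * z.im ^ 2
      ≤ (g 1 0 * (z.re ^ 2 + z.im ^ 2) + (g 1 1 - g 0 0) * z.re - g 0 1) ^ 2 +
          g.val.discr * z.im ^ 2 := le_add_of_nonneg_left (sq_nonneg _)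
    _ = Complex.normSq (σ g z * denom g z - num g z) := by
      simp only [σ, if_pos hg, num, denom, Complex.normSq_apply, discr_fin_two, trace_fin_two,
        det_fin_two]
      simp only [ContinuousAlgEquiv.refl_apply, Complex.sub_re, Complex.mul_re, coe_re,
        Complex.add_re, Complex.ofReal_re, Complex.ofReal_im, coe_im, zero_mul, sub_zero,
        Complex.add_im, Complex.mul_im, add_zero, Complex.sub_im]
      ring
    _ = _ := by rw [← sinh_half_dist_smul_sq]; ring

theorem trace_sq_le_sinh_half_dist_smul {g : GL (Fin 2) ℝ} (hg : g.det.val < 0) (z : ℍ) :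
    g.val.trace ^ 2 ≤ 4 * |g.det.val| * Real.sinh (dist z (g • z) / 2) ^ 2 := by
  refine le_of_mul_le_mul_right ?_ (pow_pos z.im_pos 2)
  calc g.val.trace ^ 2 * z.im ^ 2
      ≤ (g 1 0 * (z.re ^ 2 + z.im ^ 2) + (g 1 1 - g 0 0) * z.re - g 0 1) ^ 2 +
          g.val.trace ^ 2 * z.im ^ 2 := le_add_of_nonneg_left (sq_nonneg _)
    _ = Complex.normSq (σ g z * denom g z - num g z) := by
      simp only [σ, if_neg hg.not_gt, num, denom, Complex.normSq_apply, trace_fin_two]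
      simp only [Complex.conjCAE_apply, Complex.sub_re, Complex.mul_re, Complex.conj_re, coe_re,
        Complex.add_re, Complex.ofReal_re, Complex.ofReal_im, coe_im, zero_mul, sub_zero,
        Complex.conj_im, Complex.add_im, Complex.mul_im, add_zero, neg_mul, sub_neg_eq_add,
        Complex.sub_im]
      ring
    _ = _ := by rw [← sinh_half_dist_smul_sq]; ring

theorem coe_S_smul (z : ℍ) : (↑(ModularGroup.S • z) : ℂ) = -(z : ℂ)⁻¹ := by
  rw [modular_S_smul, coe_mk, inv_neg]

theorem S_smul_re (z : ℍ) : (ModularGroup.S • z).re = -z.re / Complex.normSq z := by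
  rw [← coe_re, coe_S_smul, Complex.neg_re, Complex.inv_re, coe_re, neg_div]

theorem S_smul_im (z : ℍ) : (ModularGroup.S • z).im = z.im / Complex.normSq z := by
  rw [← coe_im, coe_S_smul, Complex.neg_im, Complex.inv_im, coe_im, neg_div, neg_neg]

theorem upperRightHom_smul (x : ℝ) (z : ℍ) :
    GeneralLinearGroup.upperRightHom x • z = x +ᵥ z := by
  ext
  simp [GeneralLinearGroup.upperRightHom, coe_smul, num, denom, σ, add_comm]

theorem exists_smul_I_eq_I_and_smul_re_eq_zero (z : ℍ) :
    ∃ g : GL (Fin 2) ℝ, g • I = I ∧ (g • z).re = 0 := by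
  obtain ⟨t, ht⟩ : ∃ t : ℝ, z.re * (t * t) + (z.re ^ 2 + z.im ^ 2 - 1) * t + -z.re = 0 := by
    by_cases hre : z.re = 0
    · exact ⟨0, by simp [hre]⟩
    · refine exists_quadratic_eq_zero hre ⟨√(discrim _ _ _), (Real.mul_self_sqrt ?_).symm⟩
      rw [discrim]
      nlinarith [sq_nonneg (z.re ^ 2 + z.im ^ 2 - 1), sq_nonneg z.re]
  have hdet : 0 < !![1, t; -t, 1].det := by
    rw [det_fin_two_of]
    nlinarith [sq_nonneg t]
  -- `z ↦ (z + t) / (1 - t z)` is a rotation about `I`.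
  refine ⟨.mkOfDetNeZero _ hdet.ne', ?_, ?_⟩
  · rw [gl_smul_I_eq_I_iff_of_pos (by simpa [GeneralLinearGroup.mkOfDetNeZero] using hdet)]
    simp [GeneralLinearGroup.mkOfDetNeZero]
  · rw [re_smul, Complex.div_re, ← add_div, div_eq_zero_iff]
    left
    simp only [num, denom, GeneralLinearGroup.mkOfDetNeZero, GeneralLinearGroup.val_mk', of_apply,
      cons_val', cons_val_zero, cons_val_fin_one, cons_val_one, Complex.ofReal_one, one_mul,
      Complex.add_re, coe_re, Complex.ofReal_re, Complex.ofReal_neg, neg_mul, Complex.neg_re,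
      Complex.mul_re, Complex.ofReal_im, coe_im, zero_mul, sub_zero, Complex.one_re,
      Complex.add_im, add_zero, Complex.neg_im, Complex.mul_im, Complex.one_im, mul_neg]
    linear_combination -ht

theorem exists_smul_eq_I_and_smul_im_eq_exp_dist (z w : ℍ) :
    ∃ g : GL (Fin 2) ℝ, g • z = I ∧ (g • w).re = 0 ∧ (g • w).im = Real.exp (dist z w) := by
  obtain ⟨a, ha⟩ := MulAction.exists_smul_eq (GL (Fin 2) ℝ) z I
  obtain ⟨b, hb, hb_re⟩ := exists_smul_I_eq_I_and_smul_re_eq_zero (a • w)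
  have hz : (b * a) • z = I := by rw [mul_smul, ha, hb]
  rw [← mul_smul] at hb_re
  have h_dist : dist z w = |Real.log ((b * a) • w).im| := by
    rw [← dist_smul (b * a) z w, hz, dist_of_re_eq (by simp [hb_re]), I_im, Real.log_one,
      dist_zero_left, Real.norm_eq_abs]
  rcases abs_choice (Real.log ((b * a) • w).im) with h_abs | h_abs
  · exact ⟨b * a, hz, hb_re, by rw [h_dist, h_abs, Real.exp_log (im_pos _)]⟩
  · refine ⟨(ModularGroup.S : GL (Fin 2) ℝ) * (b * a), ?_, ?_, ?_⟩ <;>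
      rw [mul_smul, ← ModularGroup.sl_moeb]
    · rw [hz, modular_S_smul]
      ext
      simp
    · rw [S_smul_re, hb_re, neg_zero, zero_div]
    · rw [S_smul_im, h_dist, h_abs, Real.exp_neg, Real.exp_log (im_pos _), Complex.normSq_apply,
        coe_re, coe_im, hb_re, mul_zero, zero_add, div_self_mul_self']

theorem exists_smul_eq_and_smul_eq_of_dist_eq {z w z' w' : ℍ} (h : dist z w = dist z' w') :
    ∃ g : GL (Fin 2) ℝ, g • z = z' ∧ g • w = w' := by
  obtain ⟨a, haz, haw_re, haw_im⟩ := exists_smul_eq_I_and_smul_im_eq_exp_dist z w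
  obtain ⟨b, hbz, hbw_re, hbw_im⟩ := exists_smul_eq_I_and_smul_im_eq_exp_dist z' w'
  have haw : a • w = b • w' :=
    UpperHalfPlane.ext_re_im (haw_re.trans hbw_re.symm) (by rw [haw_im, hbw_im, h])
  exact ⟨b⁻¹ * a, by rw [mul_smul, haz, ← hbz, inv_smul_smul],
    by rw [mul_smul, haw, inv_smul_smul]⟩

theorem im_eq_and_re_sq_eq_of_dist_eq {u v w z : ℍ} (hu : u.re = 0) (hv : v.re = 0)
    (huv : u ≠ v) (h_u : dist w u = dist z u) (h_v : dist w v = dist z v) :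
    w.im = z.im ∧ w.re ^ 2 = z.re ^ 2 := by
  have h_cosh_u := congrArg Real.cosh h_u
  have h_cosh_v := congrArg Real.cosh h_v
  have hu_im := u.im_pos
  have hv_im := v.im_pos
  have hw_im := w.im_pos
  have hz_im := z.im_pos
  rw [cosh_dist', cosh_dist', hu, div_eq_div_iff (by positivity) (by positivity)] at h_cosh_u
  rw [cosh_dist', cosh_dist', hv, div_eq_div_iff (by positivity) (by positivity)] at h_cosh_v
  have h_im_ne : u.im ^ 2 - v.im ^ 2 ≠ 0 := fun h_eq ↦
    huv <| UpperHalfPlane.ext_re_im (hu.trans hv.symm) <|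
      (pow_left_inj₀ hu_im.le hv_im.le two_ne_zero).1 (sub_eq_zero.1 h_eq)
  have h_im : w.im = z.im := by
    refine sub_eq_zero.1 ((mul_eq_zero.1 ?_).resolve_left
      (mul_ne_zero (mul_ne_zero two_ne_zero (mul_pos hu_im hv_im).ne') h_im_ne))
    linear_combination u.im * h_cosh_v - v.im * h_cosh_u
  refine ⟨h_im, ?_⟩
  rw [h_im] at h_cosh_u
  refine mul_right_cancel₀ (mul_pos (mul_pos two_pos hz_im) hu_im).ne' ?_
  linear_combination h_cosh_u

theorem forall_eq_self_or_forall_eq_J_smul_of_isometry {f : ℍ → ℍ} (hf : Isometry f) {u v : ℍ}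
    (hu : u.re = 0) (hv : v.re = 0) (huv : u ≠ v) (hfu : f u = u) (hfv : f v = v) :
    (∀ z, f z = z) ∨ ∀ z, f z = J • z := by
  have h_coord (z : ℍ) : (f z).im = z.im ∧ (f z).re ^ 2 = z.re ^ 2 :=
    im_eq_and_re_sq_eq_of_dist_eq hu hv huv
      (by rw [← hf.dist_eq z u, hfu]) (by rw [← hf.dist_eq z v, hfv])
  let p : ℍ := (1 : ℝ) +ᵥ I
  have hp : p.re = 1 := by simp [p]
  have h_re_p_sq : (f p).re ^ 2 = 1 := by rw [(h_coord p).2, hp, one_pow]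
  have h_re (z : ℍ) : (f z).re * (f p).re = z.re := by
    have h_dist := congrArg Real.cosh (hf.dist_eq z p)
    have hz_im := z.im_pos
    have hp_im := p.im_pos
    rw [cosh_dist', cosh_dist', (h_coord z).1, (h_coord p).1, hp,
      div_left_inj' (by positivity)] at h_dist
    linear_combination (-1 / 2) * h_dist + (1 / 2) * (h_coord z).2 + (1 / 2) * h_re_p_sq
  rcases sq_eq_one_iff.1 h_re_p_sq with h_one | h_neg_one
  · left
    intro z
    refine UpperHalfPlane.ext_re_im ?_ (h_coord z).1
    simpa [h_one] using h_re z
  · right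
    intro z
    refine UpperHalfPlane.ext_re_im ?_ ?_
    · rw [← coe_re (J • z), coe_J_smul, Complex.neg_re, Complex.conj_re, coe_re, ← h_re z,
        h_neg_one, mul_neg_one, neg_neg]
    · rw [← coe_im (J • z), coe_J_smul, Complex.neg_im, Complex.conj_im, neg_neg, coe_im,
        (h_coord z).1]

theorem exists_gl_smul_eq_of_isometry {f : ℍ → ℍ} (hf : Isometry f) :
    ∃ g : GL (Fin 2) ℝ, ∀ z, f z = g • z := by
  let v : ℍ := ⟨2 * Complex.I, by simp⟩
  have hv_im : v.im = 2 := by simp [v]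
  have hIv : I ≠ v := fun h ↦ by simpa [hv_im] using congrArg UpperHalfPlane.im h
  obtain ⟨g, hgI, hgv⟩ := exists_smul_eq_and_smul_eq_of_dist_eq (hf.dist_eq I v).symm
  have h_isom : Isometry fun z ↦ g⁻¹ • f z := (isometry_smul ℍ g⁻¹).comp hf
  rcases forall_eq_self_or_forall_eq_J_smul_of_isometry h_isom I_re (by simp [v]) hIv
    (by rw [← hgI, inv_smul_smul]) (by rw [← hgv, inv_smul_smul]) with h | h
  · exact ⟨g, fun z ↦ inv_smul_eq_iff.1 (h z)⟩
  · exact ⟨g * J, fun z ↦ (inv_smul_eq_iff.1 (h z)).trans (mul_smul g J z).symm⟩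

/-- An isometry of a metric space is parabolic if it moves every point, but some points by
arbitrarily small distances. -/
structure IsParabolicIsometry {X : Type*} [PseudoMetricSpace X] (g : X ≃ᵢ X) : Prop where
  displacement_pos : ∀ x, 0 < dist x (g x)
  iInf_displacement : ⨅ x, dist x (g x) = 0

theorem le_apply_ciInf {ι α β : Type*} [Nonempty ι] [ConditionallyCompleteLinearOrder α]
    [TopologicalSpace α] [OrderTopology α] [Preorder β] [TopologicalSpace β] [ClosedIciTopology β]
    {φ : α → β} (hφ : Continuous φ) {u : ι → α} (hu : BddBelow (Set.range u)) {c : β}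
    (hc : ∀ i, c ≤ φ (u i)) : c ≤ φ (⨅ i, u i) := by
  have h_closure : closure (Set.range u) ⊆ φ ⁻¹' Set.Ici c :=
    (isClosed_Ici.preimage hφ).closure_subset_iff.2 (Set.range_subset_iff.2 hc)
  exact h_closure (csInf_mem_closure (Set.range_nonempty u) hu)

theorem nonpos_of_le_sinh_half_dist {X : Type*} [PseudoMetricSpace X] [Nonempty X] {f : X → X}
    (hf : ⨅ x, dist x (f x) = 0) {a c : ℝ}
    (h : ∀ x, c ≤ a * Real.sinh (dist x (f x) / 2) ^ 2) : c ≤ 0 := by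
  have h_bdd : BddBelow (Set.range fun x ↦ dist x (f x)) :=
    ⟨0, Set.forall_mem_range.2 fun _ ↦ dist_nonneg⟩
  simpa [hf] using le_apply_ciInf (φ := fun d ↦ a * Real.sinh (d / 2) ^ 2) (by fun_prop) h_bdd h

theorem IsParabolicIsometry.exists_isParabolic_forall_eq_smul {g : ℍ ≃ᵢ ℍ}
    (hg : IsParabolicIsometry g) :
    ∃ m : GL (Fin 2) ℝ, m.IsParabolic ∧ ∀ z, g z = m • z := by
  obtain ⟨m, hm⟩ := exists_gl_smul_eq_of_isometry g.isometry
  have h_fixed (z : ℍ) : m • z ≠ z := fun h ↦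
    (hg.displacement_pos z).ne' (by rw [hm, h, dist_self])
  rcases lt_or_gt_of_ne m.det.ne_zero with h_neg | h_pos
  · have h_trace : m.val.trace ^ 2 ≤ 0 := nonpos_of_le_sinh_half_dist hg.iInf_displacement
      fun z ↦ by rw [hm]; exact trace_sq_le_sinh_half_dist_smul h_neg z
    obtain ⟨z, hz⟩ := (exists_gl_smul_eq_self_iff_trace_eq_zero h_neg).2
      (sq_nonpos_iff _ |>.1 h_trace)
    exact (h_fixed z hz).elim
  · have h_discr : m.val.discr ≤ 0 := nonpos_of_le_sinh_half_dist hg.iInf_displacement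
      fun z ↦ by rw [hm]; exact discr_le_sinh_half_dist_smul h_pos z
    have h_not_elliptic : ¬ m.IsElliptic := fun h ↦
      h_fixed _ ((gl_smul_eq_self_iff_eq_fixedPt h_pos h).2 rfl)
    refine ⟨m, ⟨fun h_scalar ↦ ?_, h_discr.eq_of_not_lt h_not_elliptic⟩, hm⟩
    exact h_fixed I (forall_smul_eq_self_iff_mem_center.2
      (GeneralLinearGroup.mem_center_iff_val_mem_range_scalar.2 h_scalar) I)

theorem det_eq_parabolicEigenvalue_sq {g : GL (Fin 2) ℝ} (hg : g.IsParabolic) :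
    g.det.val = g.val.parabolicEigenvalue ^ 2 := by
  have h_discr := hg.2
  rw [discr_fin_two] at h_discr
  rw [parabolicEigenvalue, GeneralLinearGroup.val_det_apply]
  linear_combination -h_discr / 4

theorem coe_smul_of_isParabolic {g : GL (Fin 2) ℝ} (hg : g.IsParabolic) (z : ℍ) :
    (↑(g • z) : ℂ) = num g z / denom g z :=
  coe_smul_of_det_pos (det_eq_parabolicEigenvalue_sq hg ▸
    sq_pos_of_ne_zero (GeneralLinearGroup.parabolicEigenvalue_ne_zero hg)) z

theorem exists_smul_eq_vadd_of_apply_one_zero_eq_zero {g : GL (Fin 2) ℝ} (hg : g.IsParabolic)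
    (hc : g 1 0 = 0) : ∃ t : ℝ, t ≠ 0 ∧ ∀ z : ℍ, g • z = t +ᵥ z := by
  obtain ⟨h_diag, hb⟩ := (GeneralLinearGroup.isParabolic_iff_of_upperTriangular hc).1 hg
  have hd : g 1 1 ≠ 0 := fun hd ↦ g.det_ne_zero (by rw [det_fin_two, hc, hd]; ring)
  refine ⟨g 0 1 / g 1 1, div_ne_zero hb hd, fun z ↦ UpperHalfPlane.ext ?_⟩
  rw [coe_smul_of_isParabolic hg, coe_vadd, num, denom, hc, h_diag, Complex.ofReal_zero, zero_mul,
    zero_add, add_div, mul_div_cancel_left₀ _ (Complex.ofReal_ne_zero.2 hd), Complex.ofReal_div,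
    add_comm]

theorem exists_coe_smul_sub_eq {g : GL (Fin 2) ℝ} (hg : g.IsParabolic) (hc : g 1 0 ≠ 0) :
    ∃ ξ : ℝ, ∀ z : ℍ, (↑(g • z) : ℂ) - ξ =
      g.val.parabolicEigenvalue * (z - ξ) / (g 1 0 * (z - ξ) + g.val.parabolicEigenvalue) := by
  obtain ⟨ξ, hξ⟩ : ∃ ξ, g 1 0 * ξ = (g 0 0 - g 1 1) / 2 := ⟨_, mul_div_cancel₀ _ hc⟩
  have hdet := det_eq_parabolicEigenvalue_sq hg
  obtain ⟨l, hl⟩ : ∃ l, l = g.val.parabolicEigenvalue := ⟨_, rfl⟩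
  have hl_eq : l = (g 0 0 + g 1 1) / 2 := by rw [hl, parabolicEigenvalue, trace_fin_two]
  rw [← hl] at hdet ⊢
  have ha : g 0 0 = l + g 1 0 * ξ := by linear_combination -hl_eq - hξ
  have hd : g 1 1 = l - g 1 0 * ξ := by linear_combination hξ - hl_eq
  have hb : g 0 1 = -g 1 0 * ξ ^ 2 := by
    rw [GeneralLinearGroup.val_det_apply, det_fin_two, ha, hd] at hdet
    refine mul_left_cancel₀ hc ?_
    linear_combination -hdet
  refine ⟨ξ, fun z ↦ ?_⟩
  have h_denom : denom g z = g 1 0 * (z - ξ) + l := by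
    rw [denom, hd]
    push_cast
    ring
  rw [coe_smul_of_isParabolic hg, div_sub' (denom_ne_zero g z), ← h_denom, num, denom, ha, hb, hd]
  push_cast
  ring

theorem exists_S_smul_vadd_smul_eq_vadd {g : GL (Fin 2) ℝ} (hg : g.IsParabolic)
    (hc : g 1 0 ≠ 0) :
    ∃ x t : ℝ, t ≠ 0 ∧
      ∀ z : ℍ, ModularGroup.S • (x +ᵥ g • z) = t +ᵥ ModularGroup.S • (x +ᵥ z) := by
  have hl := GeneralLinearGroup.parabolicEigenvalue_ne_zero hg
  obtain ⟨ξ, hξ⟩ := exists_coe_smul_sub_eq hg hc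
  refine ⟨-ξ, -(g 1 0 / g.val.parabolicEigenvalue), neg_ne_zero.2 (div_ne_zero hc hl),
    fun z ↦ UpperHalfPlane.ext ?_⟩
  have hl' : (g.val.parabolicEigenvalue : ℂ) ≠ 0 := Complex.ofReal_ne_zero.2 hl
  have h_shift : (z : ℂ) - ξ ≠ 0 := sub_ne_zero.2 (ne_ofReal z ξ)
  rw [coe_vadd, coe_S_smul, coe_S_smul, coe_vadd, coe_vadd, Complex.ofReal_neg, neg_add_eq_sub,
    neg_add_eq_sub, hξ, inv_div, add_div, mul_div_mul_right _ _ h_shift,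
    div_mul_cancel_left₀ hl']
  push_cast
  ring

theorem exists_smul_smul_eq_vadd_smul {g : GL (Fin 2) ℝ} (hg : g.IsParabolic) :
    ∃ (a : GL (Fin 2) ℝ) (t : ℝ), t ≠ 0 ∧ ∀ z : ℍ, a • g • z = t +ᵥ a • z := by
  by_cases hc : g 1 0 = 0
  · obtain ⟨t, ht, hg_smul⟩ := exists_smul_eq_vadd_of_apply_one_zero_eq_zero hg hc
    exact ⟨1, t, ht, by simpa using hg_smul⟩
  · obtain ⟨x, t, ht, hg_smul⟩ := exists_S_smul_vadd_smul_eq_vadd hg hc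
    exact ⟨ModularGroup.S * GeneralLinearGroup.upperRightHom x, t, ht, fun z ↦ by
      simpa only [mul_smul, upperRightHom_smul, ← ModularGroup.sl_moeb] using hg_smul z⟩

theorem exists_common_coordinate {g h : GL (Fin 2) ℝ} (hg : g.IsParabolic) (hh : h.IsParabolic) :
    ∃ (a : GL (Fin 2) ℝ) (s t : ℝ), s ≠ 0 ∧ t ≠ 0 ∧ (∀ z : ℍ, a • g • z = s +ᵥ a • z) ∧
      ((∀ z : ℍ, a • h • z = t +ᵥ a • z) ∨
        ∀ z : ℍ, ModularGroup.S • a • h • z = t +ᵥ ModularGroup.S • a • z) := by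
  obtain ⟨a, s, hs, hag⟩ := exists_smul_smul_eq_vadd_smul hg
  have h_conj : (a * h * a⁻¹).IsParabolic := (GeneralLinearGroup.isParabolic_conj_iff a h).2 hh
  have h_smul (z : ℍ) : (a * h * a⁻¹) • a • z = a • h • z := by
    rw [smul_smul, inv_mul_cancel_right, mul_smul]
  by_cases hc : (a * h * a⁻¹) 1 0 = 0
  · obtain ⟨t, ht, hah⟩ := exists_smul_eq_vadd_of_apply_one_zero_eq_zero h_conj hc
    exact ⟨a, s, t, hs, ht, hag, .inl fun z ↦ by rw [← h_smul, hah]⟩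
  · obtain ⟨x, t, ht, hah⟩ := exists_S_smul_vadd_smul_eq_vadd h_conj hc
    refine ⟨GeneralLinearGroup.upperRightHom x * a, s, t, hs, ht, fun z ↦ ?_, .inr fun z ↦ ?_⟩
    · rw [mul_smul, mul_smul, upperRightHom_smul, upperRightHom_smul, hag, vadd_comm]
    · rw [mul_smul, mul_smul, upperRightHom_smul, upperRightHom_smul, ← h_smul, hah]

/-- The tautological action of the isometry group. -/
instance isometryEquivMulAction {X : Type*} [PseudoEMetricSpace X] : MulAction (X ≃ᵢ X) X where
  smul f x := f x
  one_smul _ := rfl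
  mul_smul _ _ _ := rfl

theorem freeGroup_lift_injective_of_height.{v} {ι G : Type v} {α : Type*} [Nontrivial ι] [Group G]
    [MulAction G α] [Nonempty α] (a : ι → G) (u : ι → α → ℤ)
    (hu : ∀ i x, u i (a i • x) = u i x + 1)
    (h_disj : Pairwise fun i j ↦ ∀ x, u i x = 0 ∨ u j x = 0) :
    Function.Injective (FreeGroup.lift a) := by
  have hu_inv (i : ι) (x : α) : u i ((a i)⁻¹ • x) = u i x - 1 := by
    rw [eq_sub_iff_add_eq, ← hu, smul_inv_smul]
  have hu_pow (i : ι) (n : ℕ) (x : α) : u i (a i ^ n • x) = u i x + n := by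
    induction n with
    | zero => simp
    | succ n ih => rw [pow_succ', mul_smul, hu, ih, Nat.cast_succ, add_assoc]
  have h_disjoint {i j : ι} (hij : i ≠ j) {A B : Set α} (hA : ∀ x ∈ A, u i x ≠ 0)
      (hB : ∀ x ∈ B, u j x ≠ 0) : Disjoint A B :=
    Set.disjoint_left.2 fun x hxA hxB ↦ (h_disj hij x).elim (hA x hxA) (hB x hxB)
  have h_pos (i : ι) : ∀ x ∈ {x | 0 < u i x}, u i x ≠ 0 := fun _ hx ↦ ne_of_gt hx
  have h_neg (i : ι) : ∀ x ∈ {x | u i x < 0}, u i x ≠ 0 := fun _ hx ↦ ne_of_lt hx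
  refine FreeGroup.injective_lift_of_ping_pong a (fun i ↦ {x | 0 < u i x}) (fun i ↦ {x | u i x < 0})
    (fun i ↦ ?_) (fun i j hij ↦ h_disjoint hij (h_pos i) (h_pos j))
    (fun i j hij ↦ h_disjoint hij (h_neg i) (h_neg j)) (fun i j ↦ ?_) (fun i ↦ ?_) (fun i ↦ ?_)
  · obtain ⟨x⟩ := ‹Nonempty α›
    refine ⟨a i ^ ((u i x).natAbs + 1) • x, ?_⟩
    rw [Set.mem_ofPred_eq, hu_pow]
    lia
  · obtain rfl | hij := eq_or_ne i j
    · exact Set.disjoint_left.2 fun x (hx : 0 < u i x) (hx' : u i x < 0) ↦ lt_asymm hx hx'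
    · exact h_disjoint hij (h_pos i) (h_neg j)
  · rintro _ ⟨x, hx, rfl⟩
    simp only [Set.mem_compl_iff, Set.mem_ofPred_eq, not_lt] at hx ⊢
    rw [hu]
    lia
  · rintro _ ⟨x, hx, rfl⟩
    simp only [Set.mem_compl_iff, Set.mem_ofPred_eq, not_lt, Pi.inv_apply] at hx ⊢
    rw [hu_inv]
    lia

theorem abs_re_mul_abs_S_smul_re_lt_one (z : ℍ) : |z.re| * |(ModularGroup.S • z).re| < 1 := by
  rw [S_smul_re, ← abs_mul, ← mul_div_assoc, abs_div, abs_of_pos z.normSq_pos,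
    div_lt_one z.normSq_pos, Complex.normSq_apply, mul_neg, abs_neg, abs_mul_self]
  exact lt_add_of_pos_right _ (mul_self_pos.2 z.im_ne_zero)

theorem round_re_div_vadd {s : ℝ} (hs : s ≠ 0) (z : ℍ) :
    round ((s +ᵥ z).re / s) = round (z.re / s) + 1 := by
  rw [vadd_re, add_div, div_self hs, add_comm, round_add_one]

theorem half_abs_le_abs_of_round_div_ne_zero {x s : ℝ} (hs : s ≠ 0) (h : round (x / s) ≠ 0) :
    |s| / 2 ≤ |x| := by
  contrapose! h
  rw [round_eq_zero_iff]
  have h_abs : |x / s| < 1 / 2 := by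
    rw [abs_div, div_lt_iff₀ (abs_pos.2 hs)]
    linarith
  obtain ⟨h_left, h_right⟩ := abs_lt.1 h_abs
  exact ⟨by linarith, h_right⟩

theorem freeGroup_lift_injective_of_four_le {g h : ℍ ≃ᵢ ℍ} {a : GL (Fin 2) ℝ} {s t : ℝ}
    (hst : 4 ≤ |s| * |t|) (hg : ∀ z : ℍ, a • g z = s +ᵥ a • z)
    (hh : ∀ z : ℍ, ModularGroup.S • a • h z = t +ᵥ ModularGroup.S • a • z) :
    Function.Injective (FreeGroup.lift ![g, h]) := by
  have hs : s ≠ 0 := by rintro rfl; norm_num at hst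
  have ht : t ≠ 0 := by rintro rfl; norm_num at hst
  have h_disj (z : ℍ) :
      round ((a • z).re / s) = 0 ∨ round ((ModularGroup.S • a • z).re / t) = 0 := by
    by_contra! h_ne
    have h_mul := mul_le_mul (half_abs_le_abs_of_round_div_ne_zero hs h_ne.1)
      (half_abs_le_abs_of_round_div_ne_zero ht h_ne.2) (by positivity) (abs_nonneg _)
    linarith [abs_re_mul_abs_S_smul_re_lt_one (a • z)]
  refine freeGroup_lift_injective_of_height ![g, h]
    ![fun z : ℍ ↦ round ((a • z).re / s), fun z ↦ round ((ModularGroup.S • a • z).re / t)] ?_ ?_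
  · rw [Fin.forall_fin_two]
    exact ⟨fun z ↦ (congrArg (fun w : ℍ ↦ round (w.re / s)) (hg z)).trans (round_re_div_vadd hs _),
      fun z ↦ (congrArg (fun w : ℍ ↦ round (w.re / t)) (hh z)).trans (round_re_div_vadd ht _)⟩
  · intro i j hij z
    fin_cases i <;> fin_cases j
    · exact (hij rfl).elim
    · exact h_disj z
    · exact (h_disj z).symm
    · exact (hij rfl).elim

theorem dist_vadd_le_iff {z : ℍ} {s ε : ℝ} :
    dist z (s +ᵥ z) ≤ ε ↔ |s| ≤ 2 * Real.sinh (ε / 2) * z.im := by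
  have h_sinh : Real.sinh (dist z (s +ᵥ z) / 2) = |s| / (2 * z.im) := by
    rw [sinh_half_dist, vadd_im, Real.sqrt_mul_self z.im_pos.le, coe_vadd, dist_comm,
      Complex.dist_eq, add_sub_cancel_right, Complex.norm_real, Real.norm_eq_abs]
  rw [← div_le_div_iff_of_pos_right two_pos, ← Real.sinh_le_sinh, h_sinh,
    div_le_iff₀ (mul_pos two_pos z.im_pos), ← mul_assoc, mul_comm (Real.sinh _)]

theorem dist_le_iff_of_semiconj {e g : ℍ → ℍ} (he : Isometry e) {s ε : ℝ}
    (hg : ∀ z, e (g z) = s +ᵥ e z) (z : ℍ) :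
    dist z (g z) ≤ ε ↔ |s| ≤ 2 * Real.sinh (ε / 2) * (e z).im := by
  rw [← he.dist_eq, hg, dist_vadd_le_iff]

theorem exp_le_mul_of_forall_le_dist {a b L : ℝ} (ha : 0 < a) (hb : 0 < b) (hL : 0 < L)
    (h : ∀ p q : ℍ, a ≤ p.im → b ≤ (ModularGroup.S • q).im → L ≤ dist p q) :
    Real.exp L ≤ a * b := by
  let p : ℍ := ⟨⟨0, a⟩, ha⟩
  let q : ℍ := ⟨⟨0, b⁻¹⟩, inv_pos.2 hb⟩
  have hq : b ≤ (ModularGroup.S • q).im := by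
    rw [S_smul_im, Complex.normSq_apply]
    simp [q]
  have h_inter : ¬ a ≤ b⁻¹ := fun hab ↦ hL.not_ge ((h q q hab hq).trans (dist_self q).le)
  have h_dist : dist p q = Real.log (a * b) := by
    rw [dist_of_re_eq (show p.re = q.re from rfl), Real.dist_eq,
      Real.log_mul ha.ne' hb.ne', ← sub_neg_eq_add, ← Real.log_inv]
    exact abs_of_nonneg (sub_nonneg.2 (Real.log_le_log (inv_pos.2 hb) (not_le.1 h_inter).le))
  rw [← Real.le_log_iff_exp_le (mul_pos ha hb), ← h_dist]
  exact h p q le_rfl hq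

theorem subset_hypConvexHull (A : Set ℍ) : A ⊆ hypConvexHull A :=
  Set.subset_sInter fun _ hC ↦ hC.1

theorem mem_hypConvexHull_margulisCusp {ε : ℝ} {g : ℍ ≃ᵢ ℍ} {z : ℍ} (hz : dist z (g z) ≤ ε) :
    z ∈ hypConvexHull (margulisCusp ε g) :=
  subset_hypConvexHull _ <| Set.mem_biUnion (x := 1) one_ne_zero <| by
    rwa [Set.mem_ofPred_eq, zpow_one]

theorem exists_dist_le_and_dist_le_of_vadd {g h : ℍ → ℍ} {a : GL (Fin 2) ℝ} {s t ε : ℝ}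
    (hε : 0 < ε) (hg : ∀ z, a • g z = s +ᵥ a • z) (hh : ∀ z, a • h z = t +ᵥ a • z) :
    ∃ z, dist z (g z) ≤ ε ∧ dist z (h z) ≤ ε := by
  have h_sinh : 0 < 2 * Real.sinh (ε / 2) := by positivity
  let w : ℍ := ⟨⟨0, (|s| + |t| + 1) / (2 * Real.sinh (ε / 2))⟩, by positivity⟩
  have hw : 2 * Real.sinh (ε / 2) * (a • a⁻¹ • w).im = |s| + |t| + 1 := by
    rw [smul_inv_smul]
    exact mul_div_cancel₀ _ h_sinh.ne'
  refine ⟨a⁻¹ • w, (dist_le_iff_of_semiconj (isometry_smul ℍ a) hg _).2 ?_,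
    (dist_le_iff_of_semiconj (isometry_smul ℍ a) hh _).2 ?_⟩ <;>
  linarith [abs_nonneg s, abs_nonneg t]

theorem sinh_sq_mul_exp_le_of_forall_le_dist {g h : ℍ → ℍ} {a : GL (Fin 2) ℝ} {s t ε L : ℝ}
    (hε : 0 < ε) (hs : s ≠ 0) (ht : t ≠ 0) (hL : 0 < L) (hg : ∀ z, a • g z = s +ᵥ a • z)
    (hh : ∀ z, ModularGroup.S • a • h z = t +ᵥ ModularGroup.S • a • z)
    (h_far : ∀ p q, dist p (g p) ≤ ε → dist q (h q) ≤ ε → L ≤ dist p q) :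
    (2 * Real.sinh (ε / 2)) ^ 2 * Real.exp L ≤ |s| * |t| := by
  have h_sinh : 0 < 2 * Real.sinh (ε / 2) := by positivity
  have ha : Isometry (a • · : ℍ → ℍ) := isometry_smul ℍ a
  have hSa : Isometry (fun z : ℍ ↦ ModularGroup.S • a • z) :=
    (isometry_smul ℍ (ModularGroup.S : GL (Fin 2) ℝ)).comp ha
  have h_exp : Real.exp L ≤ |s| / (2 * Real.sinh (ε / 2)) * (|t| / (2 * Real.sinh (ε / 2))) := by
    refine exp_le_mul_of_forall_le_dist (by positivity) (by positivity) hL fun p q hp hq ↦ ?_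
    rw [← dist_smul a⁻¹ p q]
    refine h_far _ _ ((dist_le_iff_of_semiconj ha hg _).2 ?_)
      ((dist_le_iff_of_semiconj hSa hh _).2 ?_)
    · rwa [smul_inv_smul, ← div_le_iff₀' h_sinh]
    · rwa [smul_inv_smul, ← div_le_iff₀' h_sinh]
  rwa [div_mul_div_comm, ← sq, le_div_iff₀' (by positivity)] at h_exp

/-- The separation constant `L(ε)`: a positive number, large enough that
`(2 sinh(ε/2))² exp(L(ε))` is at least `4`. -/
noncomputable def separationConstant (ε : ℝ) : ℝ :=
  Real.log (1 + (Real.sinh (ε / 2) ^ 2)⁻¹)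

theorem separationConstant_pos {ε : ℝ} (hε : 0 < ε) : 0 < separationConstant ε :=
  Real.log_pos (lt_add_of_pos_right 1 (by positivity))

theorem four_le_sinh_sq_mul_exp_separationConstant {ε : ℝ} (hε : 0 < ε) :
    4 ≤ (2 * Real.sinh (ε / 2)) ^ 2 * Real.exp (separationConstant ε) := by
  have h_sinh : 0 < Real.sinh (ε / 2) ^ 2 := by positivity
  rw [separationConstant, Real.exp_log (by positivity), mul_pow, mul_assoc, mul_add,
    mul_inv_cancel₀ h_sinh.ne']
  linarith

theorem parabolic_pingpong_free_general {ε : ℝ} (hε : 0 < ε) {g h : ℍ ≃ᵢ ℍ}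
    (hg : IsParabolicIsometry g) (hh : IsParabolicIsometry h)
    (h_far : ∀ p q, dist p (g p) ≤ ε → dist q (h q) ≤ ε →
      separationConstant ε ≤ dist p q) :
    Function.Injective (FreeGroup.lift ![g, h]) := by
  obtain ⟨m, hm, hgm⟩ := hg.exists_isParabolic_forall_eq_smul
  obtain ⟨n, hn, hhn⟩ := hh.exists_isParabolic_forall_eq_smul
  obtain ⟨a, s, t, hs, ht, has, hat⟩ := exists_common_coordinate hm hn
  simp only [← hgm, ← hhn] at has hat
  have hL := separationConstant_pos hε
  rcases hat with hat | hat
  · obtain ⟨z, hgz, hhz⟩ := exists_dist_le_and_dist_le_of_vadd hε has hat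
    exact absurd (h_far z z hgz hhz) (by rwa [dist_self, not_le])
  · exact freeGroup_lift_injective_of_four_le
      ((four_le_sinh_sq_mul_exp_separationConstant hε).trans
        (sinh_sq_mul_exp_le_of_forall_le_dist hε hs ht hL has hat h_far)) has hat

/-- Proposition 3.11 (free group 1), parabolic case, for `X = ℍ`: if the closed convex
hulls of the Margulis cusps of two parabolic isometries `g, h` are at distance at least
`L = L(ε)`, then `g` and `h` generate a free group of rank two. -/
theorem parabolic_pingpong_free (ε : ℝ) (hε : 0 < ε) :
    ∃ L : ℝ, 0 < L ∧ ∀ g h : UpperHalfPlane ≃ᵢ UpperHalfPlane,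
      (∀ x : UpperHalfPlane, 0 < dist x (g x)) →
      (⨅ x : UpperHalfPlane, dist x (g x)) = 0 →
      (∀ x : UpperHalfPlane, 0 < dist x (h x)) →
      (⨅ x : UpperHalfPlane, dist x (h x)) = 0 →
      (∀ p ∈ hypConvexHull (margulisCusp ε g),
        ∀ q ∈ hypConvexHull (margulisCusp ε h), L ≤ dist p q) →
      Function.Injective
        ⇑(FreeGroup.lift ![g, h] :
          FreeGroup (Fin 2) →* (UpperHalfPlane ≃ᵢ UpperHalfPlane)) :=
  ⟨_, separationConstant_pos hε, fun _ _ hg hg' hh hh' h_far ↦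
    parabolic_pingpong_free_general hε ⟨hg, hg'⟩ ⟨hh, hh'⟩ fun p q hp hq ↦
      h_far p (mem_hypConvexHull_margulisCusp hp) q (mem_hypConvexHull_margulisCusp hq)⟩
end
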